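/- Let p, q be positive real numbers with 1/p + 1/q = 1, and let X, Y ∈ Mₙ(ℂ). There exists a unitary matrix U ∈ Mₙ(ℂ) with U |XY*| U* = p⁻¹ |X|ᵖ + q⁻¹ |Y|^q if and only if |Y|^q = |X|ᵖ. -/

import Mathlib

open scoped ComplexOrder
open Matrix

/-- The positive semidefinite square root of a positive semidefinite matrix (Mathlib's former
`Matrix.PosSemidef.sqrt`, with its old definition). -/
noncomputable def Matrix.PosSemidef.sqrt {n 𝕜 : Type*} [Fintype n] [RCLike 𝕜] [DecidableEq n]
    {A : Matrix n n 𝕜} (hA : PosSemidef A) : Matrix n n 𝕜 :=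
  hA.1.eigenvectorUnitary.1 * diagonal ((↑) ∘ Real.sqrt ∘ hA.1.eigenvalues) *
  (star hA.1.eigenvectorUnitary : Matrix n n 𝕜)

/-- The absolute value `|Z| = (Zᴴ Z)^(1/2)` of a square complex matrix. -/
noncomputable def matAbs {n : ℕ} (Z : Matrix (Fin n) (Fin n) ℂ) : Matrix (Fin n) (Fin n) ℂ :=
  (Matrix.posSemidef_conjTranspose_mul_self Z).sqrt

/-- Real powers of a positive semidefinite (in particular, Hermitian) matrix, obtained by
applying `t ↦ t ^ r` to the eigenvalues; junk value `0` on non-Hermitian matrices. -/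
noncomputable def matRpow {n : ℕ} (A : Matrix (Fin n) (Fin n) ℂ) (r : ℝ) :
    Matrix (Fin n) (Fin n) ℂ :=
  if hA : A.IsHermitian then hA.cfc (fun t => t ^ r) else 0

/-!
By polar decomposition `|XYᴴ|` is unitarily equivalent to `|A B|`, where `A = |X|` and `B = |Y|`.
If it is also unitarily equivalent to `p⁻¹ Aᵖ + q⁻¹ B^q`, comparing traces shows that `tr |A B|`
attains the bound `p⁻¹ tr Aᵖ + q⁻¹ tr B^q`. Diagonalize `A = P diag(a) Pᴴ`, `B = Q diag(b) Qᴴ`, and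
write `|A B| = W A B` with `W` unitary, so that `tr |A B| = ∑ M j i * a i * N i j * b j` for the
unitaries `M = Qᴴ W P` and `N = Pᴴ Q`. Its real part is at most the mean of the `a i * b j` against
the doubly stochastic weights `(|M j i|² + |N i j|²) / 2`, and the scalar Young inequality bounds
that mean by the same `p⁻¹ tr Aᵖ + q⁻¹ tr B^q`. Equality therefore holds in the scalar inequality,
i.e. `a i ^ p = b j ^ q`, wherever `N i j ≠ 0`. This says that `N` intertwines `diag(aᵖ)` and
`diag(b^q)`, which is `Aᵖ = B^q`. Conversely, if `B^q = Aᵖ` then `A B = Aᵖ`.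
-/

open scoped MatrixOrder NNReal

section Scalar

variable {n R : Type*} [Fintype n] [DecidableEq n]

lemma sum_sum_mul_add_of_mem_doublyStochastic [Semiring R] [PartialOrder R] [IsOrderedRing R]
    {D : Matrix n n R} (hD : D ∈ doublyStochastic R n) (f g : n → R) :
    ∑ i, ∑ j, D i j * (f i + g j) = ∑ i, f i + ∑ j, g j := by
  simp only [mul_add, Finset.sum_add_distrib]
  congr 1
  · simp only [← Finset.sum_mul, sum_row_of_mem_doublyStochastic hD, one_mul]
  · rw [Finset.sum_comm]
    simp only [← Finset.sum_mul, sum_col_of_mem_doublyStochastic hD, one_mul]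

lemma rpow_eq_rpow_of_mem_doublyStochastic {p q : ℝ} (hpq : p.HolderConjugate q)
    {D : Matrix n n ℝ} (hD : D ∈ doublyStochastic ℝ n) {a b : n → ℝ} (ha : 0 ≤ a) (hb : 0 ≤ b)
    (h : (∑ i, a i ^ p) / p + (∑ j, b j ^ q) / q ≤ ∑ i, ∑ j, D i j * (a i * b j))
    {i j : n} (hij : D i j ≠ 0) : a i ^ p = b j ^ q := by
  have young (i j) : D i j * (a i * b j) ≤ D i j * (a i ^ p / p + b j ^ q / q) :=
    mul_le_mul_of_nonneg_left (Real.young_inequality_of_nonneg (ha i) (hb j) hpq)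
      (nonneg_of_mem_doublyStochastic hD)
  have young_row (i) := Finset.sum_le_sum fun j (_ : j ∈ Finset.univ) ↦ young i j
  rw [Finset.sum_div, Finset.sum_div, ← sum_sum_mul_add_of_mem_doublyStochastic hD] at h
  have eq_sum := (Finset.sum_le_sum fun i _ ↦ young_row i).antisymm h
  have eq_row := (Finset.sum_eq_sum_iff_of_le fun i _ ↦ young_row i).1 eq_sum i (Finset.mem_univ i)
  have eq_term := (Finset.sum_eq_sum_iff_of_le fun j _ ↦ young i j).1 eq_row j (Finset.mem_univ j)
  exact (Real.young_inequality_eq_iff_of_nonneg (ha i) (hb j) hpq).1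
    (mul_left_cancel₀ hij eq_term)

end Scalar

section FunctionalCalculus

variable {A : Type*} [Ring A] [StarRing A] [TopologicalSpace A] [Algebra ℝ A]
  [ContinuousFunctionalCalculus ℝ A IsSelfAdjoint] [PartialOrder A] [StarOrderedRing A]
  [NonnegSpectrumClass ℝ A] [IsTopologicalRing A] [T2Space A]

lemma abs_unitary_mul_mul_star {u w : A} (hu : u ∈ unitary A) (hw : w ∈ unitary A) (a : A) :
    CFC.abs (u * a * star w) = w * CFC.abs a * star w := by
  refine CFC.sqrt_unique ?_ (star_right_conjugate_nonneg (CFC.abs_nonneg a) w)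
  calc w * CFC.abs a * star w * (w * CFC.abs a * star w)
      = w * CFC.abs a * (star w * w) * CFC.abs a * star w := by simp only [mul_assoc]
    _ = w * (CFC.abs a * CFC.abs a) * star w := by
      simp only [Unitary.star_mul_self_of_mem hw, mul_one, mul_assoc]
    _ = w * star a * (star u * u) * a * star w := by
      simp only [CFC.abs_mul_abs, Unitary.star_mul_self_of_mem hu, mul_one, mul_assoc]
    _ = star (u * a * star w) * (u * a * star w) := by
      simp only [star_mul, star_star, mul_assoc]

lemma mul_eq_rpow_of_rpow_eq_rpow {p q : ℝ} (hpq : p.HolderConjugate q) {a b : A}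
    (ha : 0 ≤ a) (hb : 0 ≤ b) (h : b ^ q = a ^ p) : a * b = a ^ p := by
  lift p to ℝ≥0 using hpq.nonneg
  lift q to ℝ≥0 using hpq.symm.nonneg
  replace hpq : p.HolderConjugate q := by exact_mod_cast hpq
  have hp := hpq.pos
  have hq := hpq.symm.pos
  rw [← CFC.nnrpow_eq_rpow hp] at h ⊢
  rw [← CFC.nnrpow_eq_rpow hq] at h
  have hb' : b = a ^ (p * q⁻¹) := by
    rw [← CFC.nnrpow_nnrpow, ← h, CFC.nnrpow_nnrpow_inv b hq.ne']
  calc a * b = a ^ (1 : ℝ≥0) * a ^ (p * q⁻¹) := by rw [CFC.nnrpow_one a, ← hb']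
    _ = a ^ (1 + p * q⁻¹) := (CFC.nnrpow_add one_pos (by positivity)).symm
    _ = a ^ p := by
      rw [← mul_inv_cancel₀ hp.ne', ← mul_add, hpq.inv_add_inv_eq_one, mul_one]

end FunctionalCalculus

section Polar

variable {𝕜 m n : Type*} [RCLike 𝕜] [Fintype m]

lemma exists_linearIsometry_apply_eq {E V : Type*} [AddCommGroup E] [Module 𝕜 E]
    [NormedAddCommGroup V] [InnerProductSpace 𝕜 V] [FiniteDimensional 𝕜 V]
    {f g : E →ₗ[𝕜] V} (h : ∀ v, ‖f v‖ = ‖g v‖) :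
    ∃ L : V →ₗᵢ[𝕜] V, ∀ v, L (f v) = g v := by
  have ker_le : f.ker ≤ g.ker := fun v hv ↦ by
    rw [LinearMap.mem_ker] at hv ⊢
    rw [← norm_eq_zero, ← h, hv, norm_zero]
  let φ : f.range →ₗ[𝕜] V := f.ker.liftQ g ker_le ∘ₗ f.quotKerEquivRange.symm
  have φ_apply (v : E) : φ ⟨f v, f.mem_range_self v⟩ = g v := by
    simp [φ, LinearMap.quotKerEquivRange_symm_apply_image]
  let ι : f.range →ₗᵢ[𝕜] V := ⟨φ, by rintro ⟨_, v, rfl⟩; simp [φ_apply, h]⟩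
  exact ⟨ι.extend, fun v ↦ (ι.extend_apply ⟨f v, _⟩).trans (φ_apply v)⟩

lemma norm_toEuclideanLin_sq [Fintype n] [DecidableEq n] (Z : Matrix m n 𝕜)
    (v : EuclideanSpace 𝕜 n) :
    (‖toEuclideanLin Z v‖ ^ 2 : 𝕜) = inner 𝕜 v (toEuclideanLin (Zᴴ * Z) v) := by
  classical
  rw [← inner_self_eq_norm_sq_to_K, ← LinearMap.adjoint_inner_right,
    ← toEuclideanLin_conjTranspose_eq_adjoint, toLpLin_mul_same, LinearMap.comp_apply]

lemma exists_unitary_mul_eq_of_conjTranspose_mul_self_eq [DecidableEq m] [Finite n]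
    {Z A : Matrix m n 𝕜} (h : Zᴴ * Z = Aᴴ * A) : ∃ U ∈ unitaryGroup m 𝕜, U * A = Z := by
  classical
  cases nonempty_fintype n
  have norm_eq (v) : ‖toEuclideanLin A v‖ = ‖toEuclideanLin Z v‖ := by
    have := (norm_toEuclideanLin_sq A v).trans (h ▸ (norm_toEuclideanLin_sq Z v).symm)
    exact (sq_eq_sq₀ (norm_nonneg _) (norm_nonneg _)).1 (by exact_mod_cast this)
  obtain ⟨L, hL⟩ := exists_linearIsometry_apply_eq norm_eq
  let T := toEuclideanCLM (n := m) (𝕜 := 𝕜)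
  refine ⟨T.symm L.toContinuousLinearMap, mem_unitaryGroup_iff'.2 (EquivLike.injective T ?_), ?_⟩
  · rw [map_mul, map_star, T.apply_symm_apply, map_one]
    exact (ContinuousLinearMap.norm_map_iff_adjoint_comp_self _).1 L.norm_map
  · refine toEuclideanLin.injective (LinearMap.ext fun v ↦ ?_)
    rw [toLpLin_mul_same, LinearMap.comp_apply, ← hL, ← coe_toEuclideanCLM_eq_toEuclideanLin]
    exact congr($(T.apply_symm_apply L.toContinuousLinearMap) _)

lemma exists_unitary_mul_abs_eq [DecidableEq m] (Z : Matrix m m 𝕜) :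
    ∃ U ∈ unitaryGroup m 𝕜, U * CFC.abs Z = Z :=
  exists_unitary_mul_eq_of_conjTranspose_mul_self_eq <| by
    rw [← star_eq_conjTranspose, ← star_eq_conjTranspose, (CFC.abs_nonneg Z).star_eq,
      CFC.abs_mul_abs]

lemma exists_unitary_abs_mul_conjTranspose_eq [DecidableEq m] (X Y : Matrix m m 𝕜) :
    ∃ W ∈ unitaryGroup m 𝕜, CFC.abs (X * Yᴴ) = W * CFC.abs (CFC.abs X * CFC.abs Y) * Wᴴ := by
  obtain ⟨V, hV, hX⟩ := exists_unitary_mul_abs_eq X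
  obtain ⟨W, hW, hY⟩ := exists_unitary_mul_abs_eq Y
  refine ⟨W, hW, ?_⟩
  calc CFC.abs (X * Yᴴ) = CFC.abs (V * (CFC.abs X * CFC.abs Y) * star W) := by
        conv_lhs => rw [← hX, ← hY, ← star_eq_conjTranspose, star_mul,
          (CFC.abs_nonneg Y).star_eq]
        simp only [mul_assoc]
    _ = _ := abs_unitary_mul_mul_star hV hW _

end Polar

section Trace

variable {𝕜 n : Type*} [RCLike 𝕜] [Fintype n] [DecidableEq n]

lemma map_norm_sq_mem_doublyStochastic {U : Matrix n n 𝕜} (hU : U ∈ unitaryGroup n 𝕜) :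
    U.map (‖·‖ ^ 2) ∈ doublyStochastic ℝ n := by
  refine mem_doublyStochastic_iff_sum.2 ⟨fun i j ↦ sq_nonneg ‖U i j‖, fun i ↦ ?_, fun j ↦ ?_⟩
  · have := congr_fun₂ (mem_unitaryGroup_iff.1 hU) i i
    simp only [mul_apply, star_apply, RCLike.star_def, RCLike.mul_conj, one_apply_eq] at this
    simpa using by exact_mod_cast this
  · have := congr_fun₂ (mem_unitaryGroup_iff'.1 hU) j j
    simp only [mul_apply, star_apply, RCLike.star_def, RCLike.conj_mul, one_apply_eq] at this
    simpa using by exact_mod_cast this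

lemma norm_sq_average_mem_doublyStochastic {M N : Matrix n n 𝕜} (hM : M ∈ unitaryGroup n 𝕜)
    (hN : N ∈ unitaryGroup n 𝕜) :
    of (fun i j ↦ (‖M j i‖ ^ 2 + ‖N i j‖ ^ 2) / 2) ∈ doublyStochastic ℝ n := by
  have average_eq : of (fun i j ↦ (‖M j i‖ ^ 2 + ‖N i j‖ ^ 2) / 2) =
      (1 / 2 : ℝ) • (M.map (‖·‖ ^ 2))ᵀ + (1 / 2 : ℝ) • N.map (‖·‖ ^ 2) := by
    ext i j
    change (‖M j i‖ ^ 2 + ‖N i j‖ ^ 2) / 2 = 1 / 2 * ‖M j i‖ ^ 2 + 1 / 2 * ‖N i j‖ ^ 2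
    ring
  rw [average_eq]
  exact convex_doublyStochastic
    (transpose_mem_doublyStochastic_iff.2 (map_norm_sq_mem_doublyStochastic hM))
    (map_norm_sq_mem_doublyStochastic hN) (by norm_num) (by norm_num) (by norm_num)

lemma trace_mul_diagonal_mul_mul_diagonal {R : Type*} [NonUnitalSemiring R] (M N : Matrix n n R)
    (c d : n → R) :
    (M * diagonal c * N * diagonal d).trace = ∑ i, ∑ j, M j i * c i * N i j * d j := by
  simp only [trace, diag_apply, mul_diagonal, mul_apply (M := M * diagonal c), Finset.sum_mul]
  exact Finset.sum_comm

lemma re_trace_mul_diagonal_mul_mul_diagonal_le (M N : Matrix n n 𝕜) {a b : n → ℝ}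
    (ha : 0 ≤ a) (hb : 0 ≤ b) :
    RCLike.re (M * diagonal (fun i ↦ (a i : 𝕜)) * N * diagonal (fun i ↦ (b i : 𝕜))).trace ≤
      ∑ i, ∑ j, (‖M j i‖ ^ 2 + ‖N i j‖ ^ 2) / 2 * (a i * b j) := by
  rw [trace_mul_diagonal_mul_mul_diagonal, map_sum]
  simp only [map_sum]
  refine Finset.sum_le_sum fun i _ ↦ Finset.sum_le_sum fun j _ ↦ ?_
  calc RCLike.re (M j i * a i * N i j * b j) ≤ ‖M j i * a i * N i j * b j‖ := RCLike.re_le_norm _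
    _ = ‖M j i‖ * ‖N i j‖ * (a i * b j) := by
      simp only [norm_mul, RCLike.norm_of_nonneg (ha i), RCLike.norm_of_nonneg (hb j)]
      ring
    _ ≤ (‖M j i‖ ^ 2 + ‖N i j‖ ^ 2) / 2 * (a i * b j) := by
      gcongr
      · exact mul_nonneg (ha i) (hb j)
      · linarith [two_mul_le_add_sq ‖M j i‖ ‖N i j‖]

lemma mul_diagonal_mul_conjTranspose_eq {R : Type*} [CommRing R] [StarRing R] {P Q : Matrix n n R}
    (hP : P ∈ unitaryGroup n R) (hQ : Q ∈ unitaryGroup n R) {c d : n → R}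
    (h : ∀ i j, (Pᴴ * Q) i j ≠ 0 → c i = d j) :
    P * diagonal c * Pᴴ = Q * diagonal d * Qᴴ := by
  have intertwine : diagonal c * (Pᴴ * Q) = Pᴴ * Q * diagonal d := by
    ext i j
    rw [diagonal_mul, mul_diagonal, mul_comm]
    by_cases hij : (Pᴴ * Q) i j = 0
    · rw [hij, zero_mul, zero_mul]
    · rw [h i j hij]
  calc P * diagonal c * Pᴴ = P * (diagonal c * (Pᴴ * Q)) * Qᴴ := by
        simp only [mul_assoc, ← star_eq_conjTranspose, mem_unitaryGroup_iff.1 hQ, mul_one]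
    _ = P * Pᴴ * (Q * diagonal d * Qᴴ) := by simp only [intertwine, mul_assoc]
    _ = Q * diagonal d * Qᴴ := by
      rw [← star_eq_conjTranspose, mem_unitaryGroup_iff.1 hP, one_mul]

lemma exists_unitary_diagonalization_of_nonneg {A : Matrix n n 𝕜} (hA : 0 ≤ A) :
    ∃ P ∈ unitaryGroup n 𝕜, ∃ a : n → ℝ, 0 ≤ a ∧
      A = P * diagonal (fun i ↦ (a i : 𝕜)) * Pᴴ ∧
      ∀ r : ℝ, A ^ r = P * diagonal (fun i ↦ ((a i ^ r : ℝ) : 𝕜)) * Pᴴ := by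
  have hA' := nonneg_iff_posSemidef.1 hA
  refine ⟨hA'.1.eigenvectorUnitary, hA'.1.eigenvectorUnitary.2, hA'.1.eigenvalues,
    hA'.eigenvalues_nonneg, hA'.1.spectral_theorem, fun r ↦ ?_⟩
  rw [CFC.rpow_eq_cfc_real, hA'.1.cfc_eq]
  rfl

lemma trace_mul_mul_conjTranspose {R : Type*} [CommRing R] [StarRing R] {U : Matrix n n R}
    (hU : U ∈ unitaryGroup n R) (C : Matrix n n R) : (U * C * Uᴴ).trace = C.trace := by
  rw [trace_mul_cycle, ← star_eq_conjTranspose, mem_unitaryGroup_iff'.1 hU, one_mul]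

theorem rpow_eq_rpow_of_trace_le_re_trace {p q : ℝ} (hpq : p.HolderConjugate q)
    {A B W : Matrix n n 𝕜} (hA : 0 ≤ A) (hB : 0 ≤ B) (hW : W ∈ unitaryGroup n 𝕜)
    (h : RCLike.re (A ^ p).trace / p + RCLike.re (B ^ q).trace / q ≤
      RCLike.re (W * A * B).trace) :
    A ^ p = B ^ q := by
  obtain ⟨P, hP, a, ha, hAP, hAp⟩ := exists_unitary_diagonalization_of_nonneg hA
  obtain ⟨Q, hQ, b, hb, hBQ, hBq⟩ := exists_unitary_diagonalization_of_nonneg hB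
  set M := Qᴴ * W * P
  set N := Pᴴ * Q
  have hM : M ∈ unitaryGroup n 𝕜 := mul_mem (mul_mem (Unitary.star_mem hQ) hW) hP
  have hN : N ∈ unitaryGroup n 𝕜 := mul_mem (Unitary.star_mem hP) hQ
  have trace_eq : (W * A * B).trace =
      (M * diagonal (fun i ↦ (a i : 𝕜)) * N * diagonal (fun i ↦ (b i : 𝕜))).trace := by
    rw [hAP, hBQ, ← mul_assoc, trace_mul_comm]
    simp only [M, N, mul_assoc]
  rw [trace_eq, hAp, hBq, trace_mul_mul_conjTranspose hP, trace_mul_mul_conjTranspose hQ,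
    trace_diagonal, trace_diagonal] at h
  simp only [map_sum, RCLike.ofReal_re] at h
  rw [hAp, hBq]
  refine mul_diagonal_mul_conjTranspose_eq hP hQ fun i j hij ↦ ?_
  have weight_ne_zero : (‖M j i‖ ^ 2 + ‖N i j‖ ^ 2) / 2 ≠ 0 := by
    have := norm_pos_iff.2 hij
    positivity
  rw [rpow_eq_rpow_of_mem_doublyStochastic hpq (norm_sq_average_mem_doublyStochastic hM hN) ha hb
    (h.trans (re_trace_mul_diagonal_mul_mul_diagonal_le M N ha hb)) weight_ne_zero]

end Trace

theorem matrix_young_equality_iff_general {𝕜 n : Type*} [RCLike 𝕜] [Fintype n] [DecidableEq n]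
    {p q : ℝ} (hpq : p.HolderConjugate q) (X Y : Matrix n n 𝕜) :
    (∃ U ∈ unitaryGroup n 𝕜,
        U * CFC.abs (X * Yᴴ) * Uᴴ = p⁻¹ • CFC.abs X ^ p + q⁻¹ • CFC.abs Y ^ q) ↔
      CFC.abs Y ^ q = CFC.abs X ^ p := by
  have hX := CFC.abs_nonneg X
  have hY := CFC.abs_nonneg Y
  obtain ⟨W, hW, abs_eq⟩ := exists_unitary_abs_mul_conjTranspose_eq X Y
  refine ⟨fun ⟨U, hU, h⟩ ↦ ?_, fun h ↦ ⟨Wᴴ, Unitary.star_mem hW, ?_⟩⟩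
  · obtain ⟨T, hT, polar⟩ := exists_unitary_mul_abs_eq (CFC.abs X * CFC.abs Y)
    refine (rpow_eq_rpow_of_trace_le_re_trace hpq hX hY (Unitary.star_mem hT) (le_of_eq ?_)).symm
    have trace_eq := congr(RCLike.re (trace $h))
    rw [abs_eq, trace_mul_mul_conjTranspose hU, trace_mul_mul_conjTranspose hW] at trace_eq
    rw [mul_assoc, ← polar, ← mul_assoc, mem_unitaryGroup_iff'.1 hT, one_mul, trace_eq]
    simp [RCLike.smul_re, div_eq_inv_mul]
  · have hWW : Wᴴ * W = 1 := mem_unitaryGroup_iff'.1 hW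
    calc Wᴴ * CFC.abs (X * Yᴴ) * Wᴴᴴ
        = (Wᴴ * W) * CFC.abs (CFC.abs X * CFC.abs Y) * (Wᴴ * W) := by
          simp only [abs_eq, conjTranspose_conjTranspose, mul_assoc]
      _ = CFC.abs X ^ p := by
        rw [hWW, one_mul, mul_one, mul_eq_rpow_of_rpow_eq_rpow hpq hX hY h,
          CFC.abs_of_nonneg _ CFC.rpow_nonneg]
      _ = p⁻¹ • CFC.abs X ^ p + q⁻¹ • CFC.abs Y ^ q := by
        rw [h, ← add_smul, hpq.inv_add_inv_eq_one, one_smul]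

section Bridge

variable {n : ℕ}

lemma matAbs_eq_abs (Z : Matrix (Fin n) (Fin n) ℂ) : matAbs Z = CFC.abs Z := by
  have hZ := posSemidef_conjTranspose_mul_self Z
  rw [CFC.abs, CFC.sqrt_eq_real_sqrt _ (star_mul_self_nonneg Z), cfcₙ_eq_cfc]
  exact (hZ.1.cfc_eq _).symm

lemma matRpow_eq_rpow {A : Matrix (Fin n) (Fin n) ℂ} (hA : 0 ≤ A) (r : ℝ) :
    matRpow A r = A ^ r := by
  have hA' := (nonneg_iff_posSemidef.1 hA).1
  rw [matRpow, dif_pos hA', CFC.rpow_eq_cfc_real, hA'.cfc_eq]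

end Bridge

/-- **Equality, up to a unitary, in the matrix Young inequality.** -/
theorem matrix_young_equality_iff {n : ℕ} (p q : ℝ) (hp : 0 < p) (hq : 0 < q)
    (hpq : 1 / p + 1 / q = 1) (X Y : Matrix (Fin n) (Fin n) ℂ) :
    (∃ U : Matrix (Fin n) (Fin n) ℂ, Uᴴ * U = 1 ∧
        U * matAbs (X * Yᴴ) * Uᴴ =
          (p⁻¹ : ℂ) • matRpow (matAbs X) p + (q⁻¹ : ℂ) • matRpow (matAbs Y) q) ↔
      matRpow (matAbs Y) q = matRpow (matAbs X) p := by
  have hpq' : p.HolderConjugate q := ⟨by simpa using hpq, hp, hq⟩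
  simpa [matAbs_eq_abs, matRpow_eq_rpow (CFC.abs_nonneg _), mem_unitaryGroup_iff',
    star_eq_conjTranspose, ← Complex.coe_smul] using matrix_young_equality_iff_general hpq' X Y
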